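/- Assume Conditions L₁, C, D and K (so that in particular κ(q,h) = Σ_{b mod qq', b≡h mod q} κ(qq',b) and the series Σ_{k≥0} B(p^k) converges). Then for every prime p, the weighted p-adic density equals χ̃_p(𝒜); that is, χ̃_p(𝒜) = lim_{m→∞} p^m M(p^m). -/

import Mathlib

open Finset MeasureTheory Filter
open scoped BigOperators Classical Real

noncomputable section

/-- `e(z) = exp(2πiz)`. -/
def eC (z : ℝ) : ℂ := Complex.exp (2 * Real.pi * Complex.I * z)

/-- The quadratic form `f(x) = xᵀ F x` over `ℤ`. -/
def qf {s : ℕ} (F : Matrix (Fin s) (Fin s) ℤ) (x : Fin s → ℤ) : ℤ :=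
  ∑ i, ∑ j, F i j * x i * x j

/-- The quadratic form `f(x) = xᵀ F x` over `ℝ`. -/
def qfR {s : ℕ} (F : Matrix (Fin s) (Fin s) ℤ) (x : Fin s → ℝ) : ℝ :=
  ∑ i, ∑ j, (F i j : ℝ) * x i * x j

/-- `A(X) = ∑_{1 ≤ x ≤ X} a_x`. -/
def Asum (a : ℕ → ℝ) (X : ℝ) : ℝ := ∑ x ∈ Finset.Icc 1 ⌊X⌋₊, a x

/-- `A(q,h;X) = ∑_{1 ≤ x ≤ X, x ≡ h (mod q)} a_x`. -/
def AsumMod (a : ℕ → ℝ) (q h : ℕ) (X : ℝ) : ℝ :=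
  ∑ x ∈ (Finset.Icc 1 ⌊X⌋₊).filter (fun x => x % q = h % q), a x

/-- The off-diagonal block `F₂` of `F` (with `n = ⌊s/2⌋`), as a matrix over `ℚ`. -/
def F2block {s : ℕ} (F : Matrix (Fin s) (Fin s) ℤ) :
    Matrix (Fin (s / 2)) (Fin (s - s / 2)) ℚ :=
  Matrix.of fun i j =>
    (F ⟨i.1, lt_of_lt_of_le i.2 (Nat.div_le_self s 2)⟩
       ⟨s / 2 + j.1, by have := j.2; omega⟩ : ℚ)

/-- `r = rank F₂`. -/
def rankF2 {s : ℕ} (F : Matrix (Fin s) (Fin s) ℤ) : ℕ := (F2block F).rank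

/-- Condition L₁ : after a permutation of the variables, `rank F₂ ≥ 5`. -/
def CondL1 {s : ℕ} (F : Matrix (Fin s) (Fin s) ℤ) : Prop :=
  ∃ σ : Equiv.Perm (Fin s), 5 ≤ rankF2 (F.submatrix σ σ)

/-- Condition L₂ with explicit exponent `c` and implicit constant `C`. -/
def CondL2Explicit (a : ℕ → ℝ) (c C : ℝ) : Prop :=
  ∀ X : ℝ, 2 ≤ X →
    ∑ x ∈ Finset.Icc 1 ⌊X⌋₊, (a x) ^ 2 ≤ C * (Asum a X) ^ 2 / X * (Real.log X) ^ c

/-- Condition L₂. -/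
def CondL2 (a : ℕ → ℝ) : Prop :=
  ∃ c C : ℝ, 0 ≤ c ∧ 0 < C ∧ CondL2Explicit a c C

/-- Condition D : `𝒜` is distributed to the level `Q_D`. -/
def CondD (a : ℕ → ℝ) (QD : ℝ → ℝ) (κ : ℕ → ℕ → ℝ) : Prop :=
  Monotone QD ∧ (∀ q h, 0 ≤ κ q h) ∧
    ∀ m : ℕ, ∃ C : ℝ, 0 < C ∧ ∀ X : ℝ, 2 ≤ X → ∀ q : ℕ, 0 < q → (q : ℝ) ≤ QD X →
      ∀ h : ℕ, |AsumMod a q h X - κ q h * Asum a X| ≤ C * Asum a X * (Real.log X) ^ (-(m : ℝ))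

/-- Condition C : multiplicativity of `κ`. -/
def CondC (QD : ℝ → ℝ) (κ : ℕ → ℕ → ℝ) : Prop :=
  ∀ q q' h h' : ℕ, Nat.Coprime q q' → (∃ X : ℝ, ((q * q' : ℕ) : ℝ) < QD X) →
    κ (q * q') (q * h' + q' * h) = κ q (q' * h) * κ q' (q * h')

/-- Condition K : `κ(q,h) ≪ (log q)^c / q`. -/
def CondK (κ : ℕ → ℕ → ℝ) : Prop :=
  ∃ c : ℝ, 0 ≤ c ∧ ∃ C : ℝ, 0 < C ∧ ∀ q : ℕ, 2 ≤ q → ∀ h : ℕ,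
    κ q h ≤ C * (Real.log q) ^ c / q

/-- `Ψ` is a smooth approximation of `A(X)` to order `m`. -/
def IsSmoothApproxOrder (a : ℕ → ℝ) (m : ℕ) (Ψ : ℝ → ℝ) : Prop :=
  ContDiff ℝ (⊤ : ℕ∞) Ψ ∧
    (∃ C : ℝ, 0 < C ∧ ∀ X : ℝ, 2 ≤ X →
      |Ψ X - Asum a X| ≤ C * Asum a X * (Real.log X) ^ (-(m : ℝ))) ∧
    (∃ c₁ c₂ : ℝ, 0 < c₁ ∧ 0 < c₂ ∧ ∀ X : ℝ, 2 ≤ X →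
      c₁ * Asum a X / X ≤ deriv Ψ X ∧ deriv Ψ X ≤ c₂ * Asum a X / X) ∧
    (∀ y z : ℝ, 0 < y → y < z → ∃ C : ℝ, 0 < C ∧ ∀ X : ℝ, 2 ≤ X →
      (∫ u in Set.Ioc (y * X) (z * X), |deriv (deriv Ψ) u|) ≤ C * Asum a X / X)

/-- `A(X)` is smoothly approximable. -/
def SmoothlyApproximable (a : ℕ → ℝ) : Prop :=
  ∀ m : ℕ, ∃ Ψ : ℝ → ℝ, IsSmoothApproxOrder a m Ψ

/-- The weighted exponential sum `S(α) = ∑_{0 ≤ x ≤ X} a_x e(α f(x))`. -/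
def Sexp {s : ℕ} (F : Matrix (Fin s) (Fin s) ℤ) (a : ℕ → ℝ) (α X : ℝ) : ℂ :=
  ∑ x ∈ Fintype.piFinset (fun _ : Fin s => Finset.Icc 0 ⌊X⌋₊),
    (∏ i, (a (x i) : ℂ)) * eC (α * (qf F (fun i => (x i : ℤ)) : ℝ))

/-- The weighted counting function `R_{f,t}(X,𝒜)`. -/
def Rcount {s : ℕ} (F : Matrix (Fin s) (Fin s) ℤ) (t : ℤ) (a : ℕ → ℝ) (X : ℝ) : ℝ :=
  ∑ x ∈ Fintype.piFinset (fun _ : Fin s => Finset.Icc 0 ⌊X⌋₊),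
    if qf F (fun i => (x i : ℤ)) = t then ∏ i, a (x i) else 0

/-- The weighted counting function `R_{f,t}(X,𝒜,𝔅)` on the dilated box `X·[y,z]`. -/
def RcountBox {s : ℕ} (F : Matrix (Fin s) (Fin s) ℤ) (t : ℤ) (a : ℕ → ℝ) (X : ℝ)
    (y z : Fin s → ℝ) : ℝ :=
  ∑ x ∈ Fintype.piFinset (fun i : Fin s => Finset.Icc ⌈X * y i⌉₊ ⌊X * z i⌋₊),
    if qf F (fun i => (x i : ℤ)) = t then ∏ i, a (x i) else 0

/-- `S(q,a) = ∑_{h mod q} κ(q,h) e((a/q) f(h))`. -/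
def Sqa {s : ℕ} (F : Matrix (Fin s) (Fin s) ℤ) (κ : ℕ → ℕ → ℝ) (q aa : ℕ) : ℂ :=
  ∑ h ∈ Fintype.piFinset (fun _ : Fin s => Finset.range q),
    (∏ i, (κ q (h i) : ℂ)) * eC ((aa : ℝ) / q * (qf F (fun i => (h i : ℤ)) : ℝ))

/-- `S_t(q,a) = ∑_{h mod q} κ(q,h) e((a/q)(f(h) - t))`. -/
def Sta {s : ℕ} (F : Matrix (Fin s) (Fin s) ℤ) (t : ℤ) (κ : ℕ → ℕ → ℝ) (q : ℕ) (aa : ℤ) : ℂ :=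
  ∑ h ∈ Fintype.piFinset (fun _ : Fin s => Finset.range q),
    (∏ i, (κ q (h i) : ℂ)) * eC ((aa : ℝ) / q * ((qf F (fun i => (h i : ℤ)) - t : ℤ) : ℝ))

/-- `B(q) = ∑*_{a mod q} S_t(q,a)`. -/
def BqT {s : ℕ} (F : Matrix (Fin s) (Fin s) ℤ) (t : ℤ) (κ : ℕ → ℕ → ℝ) (q : ℕ) : ℂ :=
  ∑ aa ∈ (Finset.Icc 1 q).filter (fun aa => Nat.Coprime aa q), Sta F t κ q (aa : ℤ)

/-- `I(λ,X) = ∫_{[0,X]^s} ψ(u) e(λ f(u)) du`. -/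
def Ilam {s : ℕ} (F : Matrix (Fin s) (Fin s) ℤ) (ψ : ℝ → ℝ) (lam X : ℝ) : ℂ :=
  ∫ u in Set.Icc (0 : Fin s → ℝ) (fun _ => X),
    (∏ i, (ψ (u i) : ℂ)) * eC (lam * qfR F u)

/-- The truncated singular integral `ℑ(X) = ∫_{-P/X²}^{P/X²} I(λ,X) e(-λt) dλ`. -/
def SingInt {s : ℕ} (F : Matrix (Fin s) (Fin s) ℤ) (t : ℤ) (ψ : ℝ → ℝ) (P X : ℝ) : ℂ :=
  ∫ lam in Set.Ioc (-(P / X ^ 2)) (P / X ^ 2), Ilam F ψ lam X * eC (-(lam * (t : ℝ)))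

/-- `ℐ(γ,𝔅,X) = ∫_𝔅 ψ(Xu) e(γ f(u)) du` on the box `𝔅 = [y,z]`. -/
def Igam {s : ℕ} (F : Matrix (Fin s) (Fin s) ℤ) (ψ : ℝ → ℝ) (γ X : ℝ)
    (y z : Fin s → ℝ) : ℂ :=
  ∫ u in Set.Icc y z, (∏ i, (ψ (X * u i) : ℂ)) * eC (γ * qfR F u)

/-- The truncated singular integral on the box,
`ℑ_𝔅(X) = X^{s-2} ∫_{-P}^{P} ℐ(γ,𝔅,X) e(-γ t₀) dγ` with `t₀ = t/X²`. -/
def SingIntBox {s : ℕ} (F : Matrix (Fin s) (Fin s) ℤ) (t : ℤ) (ψ : ℝ → ℝ) (P X : ℝ)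
    (y z : Fin s → ℝ) : ℂ :=
  (X : ℂ) ^ ((s : ℤ) - 2) *
    ∫ γ in Set.Ioc (-P) P, Igam F ψ γ X y z * eC (-(γ * ((t : ℝ) / X ^ 2)))

/-- `𝒥(γ,𝔅) = ∫_𝔅 e(γ f(u)) du`. -/
def Jgam {s : ℕ} (F : Matrix (Fin s) (Fin s) ℤ) (γ : ℝ) (y z : Fin s → ℝ) : ℂ :=
  ∫ u in Set.Icc y z, eC (γ * qfR F u)

/-- The linear forms `g_j(z)` (the coefficient of `y_j` in the mixed part of `f`). -/
def gform {s : ℕ} (F : Matrix (Fin s) (Fin s) ℤ) (j : Fin (s / 2))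
    (v : Fin (s - s / 2) → ℤ) : ℤ :=
  2 * ∑ k : Fin (s - s / 2),
    F ⟨j.1, lt_of_lt_of_le j.2 (Nat.div_le_self s 2)⟩ ⟨s / 2 + k.1, by have := k.2; omega⟩ * v k

/-- The linear forms `h_j(y)` (the coefficient of `z_j` in the mixed part of `f`). -/
def hform {s : ℕ} (F : Matrix (Fin s) (Fin s) ℤ) (j : Fin (s - s / 2))
    (v : Fin (s / 2) → ℤ) : ℤ :=
  2 * ∑ k : Fin (s / 2),
    F ⟨s / 2 + j.1, by have := j.2; omega⟩ ⟨k.1, lt_of_lt_of_le k.2 (Nat.div_le_self s 2)⟩ * v k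

/-- The combined linear forms `H_j(x)`: `H_j(x) = g_j(z)` for `j ≤ n`,
`H_j(x) = h_{j-n}(y)` for `j > n`. -/
def Hform {s : ℕ} (F : Matrix (Fin s) (Fin s) ℤ) (x : Fin s → ℤ) (j : Fin s) : ℤ :=
  if h : j.1 < s / 2 then
    gform F ⟨j.1, h⟩ (fun k => x ⟨s / 2 + k.1, by have := k.2; omega⟩)
  else
    hform F ⟨j.1 - s / 2, by have := j.2; omega⟩
      (fun k => x ⟨k.1, lt_of_lt_of_le k.2 (Nat.div_le_self s 2)⟩)

/-- `‖x‖`, the distance from `x` to the nearest integer. -/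
def distNearInt (x : ℝ) : ℝ := |x - round x|

/-- `min(X, 1/t)`, interpreted as `X` when `t = 0`. -/
def minXval (X t : ℝ) : ℝ := if t = 0 then X else min X (1 / t)

/-- `μ(X)`: the number of `x ∈ ℤ^s` with `|x| ≤ X` and `‖α H_j(x)‖ ≤ 1/X` for all `j`. -/
def muX {s : ℕ} (F : Matrix (Fin s) (Fin s) ℤ) (α X : ℝ) : ℕ :=
  ((Fintype.piFinset (fun _ : Fin s => Finset.Icc (-⌊X⌋) ⌊X⌋)).filter
    (fun x => ∀ j : Fin s, distNearInt (α * (Hform F x j : ℝ)) ≤ 1 / X)).card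

/-- `μ(ρ,X)`: the number of `x ∈ ℤ^s` with `|x| ≤ ρX` and `‖α H_j(x)‖ ≤ ρ/X` for all `j`. -/
def muRho {s : ℕ} (F : Matrix (Fin s) (Fin s) ℤ) (α ρ X : ℝ) : ℕ :=
  ((Fintype.piFinset (fun _ : Fin s => Finset.Icc (-⌊ρ * X⌋) ⌊ρ * X⌋)).filter
    (fun x => ∀ j : Fin s, distNearInt (α * (Hform F x j : ℝ)) ≤ ρ / X)).card

/-- `‖f‖`, the maximal absolute value of the entries of `F`. -/
def Fmax {s : ℕ} (F : Matrix (Fin s) (Fin s) ℤ) : ℝ :=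
  ((Finset.univ.sup fun p : Fin s × Fin s => (F p.1 p.2).natAbs : ℕ) : ℝ)

/-- The major arcs `𝔐` (with `P` and `Q = X²/P`, so `1/(qQ) = P/(qX²)`). -/
def majorArcs (P X : ℝ) : Set ℝ :=
  ⋃ q ∈ Finset.Icc 1 ⌊P⌋₊, ⋃ aa ∈ (Finset.Icc 1 q).filter (fun aa => Nat.Coprime aa q),
    Set.Icc ((aa : ℝ) / q - P / (q * X ^ 2)) ((aa : ℝ) / q + P / (q * X ^ 2))

/-- The minor arcs `𝔪 = [0,1] ∖ 𝔐`. -/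
def minorArcs (P X : ℝ) : Set ℝ := Set.Icc 0 1 \ majorArcs P X

/-- `M(Q)`: the `κ`-weighted number of solutions of `f(x) ≡ t (mod Q)`. -/
def Mcount {s : ℕ} (F : Matrix (Fin s) (Fin s) ℤ) (t : ℤ) (κ : ℕ → ℕ → ℝ) (Q : ℕ) : ℝ :=
  ∑ h ∈ Fintype.piFinset (fun _ : Fin s => Finset.range Q),
    if (Q : ℤ) ∣ (qf F (fun i => (h i : ℤ)) - t) then ∏ i, κ Q (h i) else 0

/-- The indicator sequence of the primes. -/
def aPrime : ℕ → ℝ := fun x => if Nat.Prime x then 1 else 0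

/-- The weights `κ(q,a)` for the primes: `1/φ(q)` if `gcd(a,q)=1`, and `0` otherwise. -/
def kappaPrime : ℕ → ℕ → ℝ := fun q aa =>
  if Nat.gcd aa q = 1 then ((Nat.totient q : ℝ))⁻¹ else 0

/-- The indicator sequence of the `k`-free numbers. -/
def aKfree (k : ℕ) : ℕ → ℝ := fun x => if ∀ p : ℕ, p.Prime → ¬ p ^ k ∣ x then 1 else 0

/-- The weights `κ(q,a)` for the `k`-free numbers. -/
def kappaKfree (k : ℕ) : ℕ → ℕ → ℝ := fun q aa =>
  if ∃ p : ℕ, p.Prime ∧ p ^ k ∣ Nat.gcd q aa then 0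
  else (q : ℝ)⁻¹ * ∏ p ∈ q.primeFactors,
    ((1 - (p : ℝ) ^ (-(k : ℤ)))⁻¹ *
      (if p ∣ q / Nat.gcd q aa then 1 else 1 - (p : ℝ) ^ ((q.factorization p : ℤ) - (k : ℤ))))

/-- `ζ(k)` as a real series. -/
def zetaR (k : ℕ) : ℝ := ∑' n : ℕ, ((n : ℝ) + 1) ^ (-(k : ℤ))

/-- Condition B. -/
def CondB {s : ℕ} (F : Matrix (Fin s) (Fin s) ℤ) (t : ℤ) (k : ℕ) : Prop :=
  ∀ p : ℕ, p.Prime → (p : ℤ) ∣ 2 * F.det → ∃ x : Fin s → ℤ,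
    (2 * F.det) ^ (2 * k - 1) ∣ (qf F x - t) ∧ ∀ i, ¬ ((p : ℤ) ^ k ∣ x i)

/-!
Orthogonality of additive characters turns `p ^ m * M(p ^ m)` into the sum of `S_t(p ^ m, a)` over
all residues `a` modulo `p ^ m`. Sorting `a` by its greatest common divisor with `p ^ m` and
reducing the fractions `a / p ^ m`, which the compatibility of the weights allows, yields exactly
the partial sum of `B(p ^ k)` over `k ≤ m`.

For convergence, split the variables into two halves `y`, `z`. With `x = (y, z)`, the form is
`g(y) + h(z) + yᵀ G z`, where `G` is the off-diagonal block of `F + Fᵀ`, so Cauchy–Schwarz and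
orthogonality bound `|S_t(q, a)|²` in terms of the number of solutions of `G z ≡ 0 (mod q)`. By a
nonvanishing `r × r` minor of `G`, only a proportion `O(q ^ (-r))` of all `z` solve this
congruence. Together with Condition K, `|S_t(q, a)| ≪ q ^ (ε - r / 2)`, hence
`B(q) ≪ q ^ (1 + ε - r / 2)`, which is summable over the powers of `p` once `r ≥ 3`.
-/

open Matrix

section ResidueSums

variable {M : Type*} [AddCommMonoid M] (q : ℕ) [NeZero q]

lemma sum_piFinset_range_eq_sum_zmod {ι : Type*} [Fintype ι] [DecidableEq ι] (g : (ι → ℕ) → M) :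
    ∑ h ∈ Fintype.piFinset (fun _ : ι => range q), g h =
      ∑ x : ι → ZMod q, g fun i => (x i).val :=
  sum_nbij' (fun h i => (h i : ZMod q)) (fun x i => (x i).val)
    (fun _ _ => mem_univ _)
    (fun x _ => Fintype.mem_piFinset.2 fun i => mem_range.2 (x i).val_lt)
    (fun _ hh => funext fun i =>
      ZMod.val_cast_of_lt (mem_range.1 (Fintype.mem_piFinset.1 hh i)))
    (fun x _ => funext fun i => ZMod.natCast_zmod_val (x i))
    (fun _ hh => congrArg g <| funext fun i =>
      (ZMod.val_cast_of_lt (mem_range.1 (Fintype.mem_piFinset.1 hh i))).symm)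

lemma sum_range_eq_sum_zmod (g : ℕ → M) : ∑ a ∈ range q, g a = ∑ x : ZMod q, g x.val :=
  sum_nbij' (fun a => (a : ZMod q)) ZMod.val (fun _ _ => mem_univ _)
    (fun x _ => mem_range.2 x.val_lt) (fun _ ha => ZMod.val_cast_of_lt (mem_range.1 ha))
    (fun x _ => ZMod.natCast_zmod_val x)
    (fun _ ha => congrArg g (ZMod.val_cast_of_lt (mem_range.1 ha)).symm)

lemma sum_Icc_one_eq_sum_zmod (g : ZMod q → M) : ∑ a ∈ Icc 1 q, g a = ∑ x, g x := by
  calc ∑ a ∈ Icc 1 q, g a = ∑ a ∈ range q, g ((1 + a : ℕ) : ZMod q) := by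
        rw [← Finset.Ico_add_one_right_eq_Icc, sum_Ico_eq_sum_range, Nat.add_sub_cancel]
    _ = ∑ x : ZMod q, g (1 + x) := by
        rw [sum_range_eq_sum_zmod]
        exact sum_congr rfl fun x _ => by rw [Nat.cast_add, Nat.cast_one, ZMod.natCast_zmod_val]
    _ = ∑ x, g x := Equiv.sum_comp (Equiv.addLeft 1) g

end ResidueSums

lemma sum_prod_mul_comp_of_fiber_sum {ι α β R : Type*} [Fintype ι] [Fintype α] [Fintype β]
    [DecidableEq ι] [DecidableEq β] [CommSemiring R] (f : α → β) {v : α → R} {w : β → R}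
    (hw : ∀ b, w b = ∑ a with f a = b, v a) (g : (ι → β) → R) :
    ∑ x : ι → α, (∏ i, v (x i)) * g (f ∘ x) = ∑ y : ι → β, (∏ i, w (y i)) * g y := by
  rw [← sum_fiberwise univ (fun x => f ∘ x)]
  refine sum_congr rfl fun y _ => ?_
  have prod_w : ∏ i, w (y i) = ∑ x : ι → α with f ∘ x = y, ∏ i, v (x i) := by
    simp_rw [hw]
    rw [prod_univ_sum]
    refine sum_congr ?_ fun _ _ => rfl
    ext x
    simp [funext_iff]
  rw [prod_w, sum_mul]
  exact sum_congr rfl fun x hx => by rw [(mem_filter.1 hx).2]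

lemma sum_Icc_one_prime_pow_succ {M : Type*} [AddCommMonoid M] {p : ℕ} (hp : p.Prime) (m : ℕ)
    (g : ℕ → M) :
    ∑ a ∈ Icc 1 (p ^ (m + 1)), g a =
      ∑ a ∈ Icc 1 (p ^ m), g (p * a) +
        ∑ a ∈ Icc 1 (p ^ (m + 1)) with a.Coprime (p ^ (m + 1)), g a := by
  have coprime_iff (a : ℕ) : a.Coprime (p ^ (m + 1)) ↔ ¬ p ∣ a := by
    rw [Nat.coprime_pow_right_iff m.succ_pos, Nat.coprime_comm, hp.coprime_iff_not_dvd]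
  have multiples_eq : {a ∈ Icc 1 (p ^ (m + 1)) | ¬ a.Coprime (p ^ (m + 1))} =
      (Icc 1 (p ^ m)).map ⟨(p * ·), mul_right_injective₀ hp.ne_zero⟩ := by
    ext a
    simp only [coprime_iff, not_not, mem_filter, mem_Icc, Finset.mem_map]
    constructor
    · rintro ⟨⟨ha, hap⟩, b, rfl⟩
      exact ⟨b, ⟨Nat.pos_of_mul_pos_left ha,
        Nat.le_of_mul_le_mul_left (pow_succ' p m ▸ hap) hp.pos⟩, rfl⟩
    · rintro ⟨b, ⟨hb, hbp⟩, rfl⟩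
      exact ⟨⟨Nat.mul_pos hp.pos hb, pow_succ' p m ▸ Nat.mul_le_mul_left p hbp⟩,
        dvd_mul_right p b⟩
  rw [← sum_filter_not_add_sum_filter _ (fun a => a.Coprime (p ^ (m + 1))), multiples_eq, sum_map]
  rfl

/-- The quadratic form `xᵀ F x` of an integer matrix, evaluated over an arbitrary ring. -/
def evalForm {ι R : Type*} [Fintype ι] [CommRing R] (F : Matrix ι ι ℤ) (x : ι → R) : R :=
  x ⬝ᵥ F.map (Int.cast : ℤ → R) *ᵥ x

lemma map_evalForm {ι R S : Type*} [Fintype ι] [CommRing R] [CommRing S] (φ : R →+* S)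
    (F : Matrix ι ι ℤ) (x : ι → R) : φ (evalForm F x) = evalForm F (φ ∘ x) := by
  simp [evalForm, dotProduct, mulVec]

lemma intCast_qf {s : ℕ} {R : Type*} [CommRing R] (F : Matrix (Fin s) (Fin s) ℤ) (x : Fin s → ℤ) :
    ((qf F x : ℤ) : R) = evalForm F fun i => (x i : R) := by
  simp only [qf, evalForm, dotProduct, mulVec, map_apply, mul_sum, Int.cast_sum, Int.cast_mul]
  exact sum_congr rfl fun i _ => sum_congr rfl fun j _ => by ring

section StandardCharacter

variable (q : ℕ) [NeZero q]

lemma eC_div_mul_intCast (a n : ℤ) :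
    eC ((a : ℝ) / q * (n : ℝ)) = ZMod.stdAddChar (N := q) (a * n) := by
  rw [← Int.cast_mul, ZMod.stdAddChar_coe, eC]
  push_cast
  congr 1
  ring

lemma stdAddChar_natCast_mul (q' : ℕ) [NeZero q'] (z : ZMod (q * q')) :
    ZMod.stdAddChar ((q' : ZMod (q * q')) * z) =
      ZMod.stdAddChar (ZMod.castHom (dvd_mul_right q q') (ZMod q) z) := by
  obtain ⟨n, rfl⟩ := ZMod.intCast_surjective z
  have hq' : (q' : ℂ) ≠ 0 := NeZero.ne _
  rw [map_intCast, ZMod.stdAddChar_coe, ← Int.cast_natCast q', ← Int.cast_mul,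
    ZMod.stdAddChar_coe]
  push_cast
  field_simp

lemma sum_stdAddChar_mul (z : ZMod q) :
    ∑ x : ZMod q, ZMod.stdAddChar (x * z) = if z = 0 then (q : ℂ) else 0 := by
  rw [AddChar.sum_mulShift z (ZMod.isPrimitive_stdAddChar q), ZMod.card]
  norm_cast

end StandardCharacter

section CompleteSums

variable {s : ℕ} (F : Matrix (Fin s) (Fin s) ℤ) (t : ℤ) (κ : ℕ → ℕ → ℝ)

lemma Sta_eq_sum_zmod (q : ℕ) [NeZero q] (a : ℤ) :
    Sta F t κ q a = ∑ x : Fin s → ZMod q,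
      (∏ i, (κ q (x i).val : ℂ)) *
        ZMod.stdAddChar ((a : ZMod q) * (evalForm F x - (t : ZMod q))) := by
  rw [Sta, sum_piFinset_range_eq_sum_zmod]
  refine sum_congr rfl fun x _ => ?_
  rw [eC_div_mul_intCast, Int.cast_sub, intCast_qf]
  simp

lemma natCast_mul_Mcount (q : ℕ) [NeZero q] :
    ((q * Mcount F t κ q : ℝ) : ℂ) = ∑ a ∈ Icc 1 q, Sta F t κ q a := by
  have sum_Sta : ∑ a ∈ Icc 1 q, Sta F t κ q a = ∑ x : Fin s → ZMod q,
      (∏ i, (κ q (x i).val : ℂ)) *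
        ∑ a : ZMod q, ZMod.stdAddChar (a * (evalForm F x - (t : ZMod q))) := by
    simp_rw [Sta_eq_sum_zmod, Int.cast_natCast]
    rw [sum_Icc_one_eq_sum_zmod q fun a => ∑ x : Fin s → ZMod q, (∏ i, (κ q (x i).val : ℂ)) *
      ZMod.stdAddChar (a * (evalForm F x - (t : ZMod q))), sum_comm]
    simp_rw [mul_sum]
  rw [sum_Sta, Mcount, sum_piFinset_range_eq_sum_zmod, Complex.ofReal_mul, Complex.ofReal_sum,
    mul_sum]
  refine sum_congr rfl fun x _ => ?_
  have dvd_iff : (q : ℤ) ∣ qf F (fun i => ((x i).val : ℤ)) - t ↔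
      evalForm F x - (t : ZMod q) = 0 := by
    rw [← ZMod.intCast_zmod_eq_zero_iff_dvd, Int.cast_sub, intCast_qf]
    simp
  simp only [sum_stdAddChar_mul, dvd_iff]
  split_ifs <;> simp [mul_comm]

lemma Sta_mul_of_compat {q q' : ℕ} [NeZero q] [NeZero q']
    (hκ : ∀ h, κ q h = ∑ b ∈ range (q * q'), if b % q = h % q then κ (q * q') b else 0) (a : ℤ) :
    Sta F t κ (q * q') (q' * a) = Sta F t κ q a := by
  set reduce := ZMod.castHom (dvd_mul_right q q') (ZMod q)
  have fiber_sum (y : ZMod q) :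
      (κ q y.val : ℂ) = ∑ x : ZMod (q * q') with reduce x = y, (κ (q * q') x.val : ℂ) := by
    rw [hκ, sum_range_eq_sum_zmod, sum_filter]
    push_cast
    refine sum_congr rfl fun x _ => ?_
    have reduce_eq_iff : reduce x = y ↔ x.val % q = y.val % q := by
      rw [← ZMod.natCast_eq_natCast_iff', ZMod.natCast_zmod_val, ← map_natCast reduce,
        ZMod.natCast_zmod_val]
    simp only [reduce_eq_iff]
    split_ifs <;> simp
  rw [Sta_eq_sum_zmod, Sta_eq_sum_zmod,
    ← sum_prod_mul_comp_of_fiber_sum reduce (w := fun y => (κ q y.val : ℂ)) fiber_sum]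
  refine sum_congr rfl fun x _ => ?_
  rw [← map_evalForm, Int.cast_mul, Int.cast_natCast, mul_assoc, stdAddChar_natCast_mul]
  simp [reduce]

lemma prime_pow_mul_Mcount_eq_sum_BqT {p : ℕ} (hp : p.Prime)
    (hκ : ∀ k h, κ (p ^ k) h =
      ∑ b ∈ range (p ^ k * p), if b % p ^ k = h % p ^ k then κ (p ^ k * p) b else 0) (m : ℕ) :
    (((p : ℝ) ^ m * Mcount F t κ (p ^ m) : ℝ) : ℂ) =
      ∑ k ∈ range (m + 1), BqT F t κ (p ^ k) := by
  have : NeZero p := ⟨hp.ne_zero⟩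
  rw [← Nat.cast_pow, natCast_mul_Mcount]
  induction m with
  | zero => simp [BqT]
  | succ m ih =>
    rw [sum_range_succ, ← ih, sum_Icc_one_prime_pow_succ hp, BqT]
    congr 1
    refine sum_congr rfl fun a _ => ?_
    rw [pow_succ, Nat.cast_mul, Sta_mul_of_compat F t κ (hκ m)]

end CompleteSums

section BilinearSums

variable {R Y Z : Type*} [CommRing R] [Fintype R] [Fintype Y] [Fintype Z] {ψ : AddChar R ℂ}

lemma sum_addChar_dotProduct [DecidableEq Y] [DecidableEq R] (hψ : ψ.IsPrimitive) (c : Y → R) :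
    ∑ y : Y → R, ψ (y ⬝ᵥ c) = if c = 0 then (Fintype.card R : ℂ) ^ Fintype.card Y else 0 := by
  set χ : AddChar (Y → R) ℂ :=
    ψ.compAddMonoidHom (AddMonoidHom.mk' (· ⬝ᵥ c) fun y y' => add_dotProduct y y' c)
  have trivial_iff : χ = 0 ↔ c = 0 := by
    refine ⟨fun h => ?_, fun h => DFunLike.ext _ _ fun y => by simp [χ, h]⟩
    by_contra! hc
    obtain ⟨i, hi⟩ := Function.ne_iff.1 hc
    refine hψ hi (DFunLike.ext _ _ fun r => ?_)
    simpa [χ, mul_comm] using DFunLike.congr_fun h (Pi.single i r)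
  have := χ.sum_eq_ite
  simp only [trivial_iff, Fintype.card_fun, Nat.cast_pow] at this
  exact this

lemma card_filter_mulVec_eq [DecidableEq Z] [DecidableEq R] (B : Matrix Y Z R) (z : Z → R) :
    #{z' : Z → R | B *ᵥ z = B *ᵥ z'} = Nat.card (LinearMap.ker B.mulVecLin) := by
  have fiber_eq := AddMonoidHom.card_fiber_eq_of_mem_range B.mulVecLin
    (Set.mem_range_self z) ⟨0, map_zero _⟩
  simp only [mulVecLin_apply, eq_comm (b := B *ᵥ z)] at fiber_eq
  rw [fiber_eq, Nat.card_eq_fintype_card, Fintype.card_subtype]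
  congr with z'

lemma sum_norm_sq_sum_addChar_eq [DecidableEq Y] [DecidableEq Z] [DecidableEq R]
    (hψ : ψ.IsPrimitive) (B : Matrix Y Z R) (β : (Z → R) → ℂ) :
    ((∑ y : Y → R, ‖∑ z, β z * ψ (y ⬝ᵥ B *ᵥ z)‖ ^ 2 : ℝ) : ℂ) =
      (Fintype.card R : ℂ) ^ Fintype.card Y *
        ∑ z, ∑ z' with B *ᵥ z = B *ᵥ z', β z * starRingEnd ℂ (β z') := by
  have norm_sq_eq (y : Y → R) : ((‖∑ z, β z * ψ (y ⬝ᵥ B *ᵥ z)‖ ^ 2 : ℝ) : ℂ) =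
      ∑ z, ∑ z', β z * starRingEnd ℂ (β z') * ψ (y ⬝ᵥ (B *ᵥ z - B *ᵥ z')) := by
    rw [Complex.ofReal_pow, ← Complex.mul_conj', map_sum, sum_mul_sum]
    refine sum_congr rfl fun z _ => sum_congr rfl fun z' _ => ?_
    rw [dotProduct_sub, sub_eq_add_neg, AddChar.map_add_eq_mul, AddChar.map_neg_eq_conj, map_mul]
    ring
  simp_rw [Complex.ofReal_sum, norm_sq_eq]
  rw [sum_comm, mul_sum]
  refine sum_congr rfl fun z _ => ?_
  rw [sum_comm, sum_filter, mul_sum]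
  refine sum_congr rfl fun z' _ => ?_
  rw [← mul_sum, sum_addChar_dotProduct hψ]
  simp only [sub_eq_zero]
  split_ifs <;> ring

lemma sum_norm_sq_sum_addChar_le [DecidableEq Y] [DecidableEq Z] (hψ : ψ.IsPrimitive)
    (B : Matrix Y Z R) {β : (Z → R) → ℂ} {b : ℝ} (hβ : ∀ z, ‖β z‖ ≤ b) :
    ∑ y : Y → R, ‖∑ z, β z * ψ (y ⬝ᵥ B *ᵥ z)‖ ^ 2 ≤
      (Fintype.card R : ℝ) ^ Fintype.card Y *
        (Nat.card (LinearMap.ker B.mulVecLin) * b * ∑ z, ‖β z‖) := by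
  calc ∑ y : Y → R, ‖∑ z, β z * ψ (y ⬝ᵥ B *ᵥ z)‖ ^ 2
    _ = ‖((∑ y : Y → R, ‖∑ z, β z * ψ (y ⬝ᵥ B *ᵥ z)‖ ^ 2 : ℝ) : ℂ)‖ :=
        (Complex.norm_of_nonneg (by positivity)).symm
    _ ≤ (Fintype.card R : ℝ) ^ Fintype.card Y *
          ∑ z, ∑ z' with B *ᵥ z = B *ᵥ z', ‖β z‖ * b := by
        rw [sum_norm_sq_sum_addChar_eq hψ, norm_mul, norm_pow, Complex.norm_natCast]
        gcongr
        refine norm_sum_le_of_le _ fun z _ => norm_sum_le_of_le _ fun z' _ => ?_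
        rw [norm_mul, RCLike.norm_conj]
        gcongr
        exact hβ z'
    _ = _ := by
        simp_rw [sum_const, card_filter_mulVec_eq, nsmul_eq_mul, mul_sum]
        exact sum_congr rfl fun z _ => by ring

lemma norm_sq_bilinear_sum_le [DecidableEq Y] [DecidableEq Z] (hψ : ψ.IsPrimitive)
    (B : Matrix Y Z R) {α : (Y → R) → ℂ} {β : (Z → R) → ℂ} {a b : ℝ}
    (hα : ∀ y, ‖α y‖ ≤ a) (hβ : ∀ z, ‖β z‖ ≤ b) :
    ‖∑ y, ∑ z, α y * β z * ψ (y ⬝ᵥ B *ᵥ z)‖ ^ 2 ≤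
      a * (∑ y, ‖α y‖) * (b * ∑ z, ‖β z‖) *
        (Fintype.card R ^ Fintype.card Y * Nat.card (LinearMap.ker B.mulVecLin)) := by
  have norm_le : ‖∑ y, ∑ z, α y * β z * ψ (y ⬝ᵥ B *ᵥ z)‖ ≤
      ∑ y, ‖α y‖ * ‖∑ z, β z * ψ (y ⬝ᵥ B *ᵥ z)‖ :=
    norm_sum_le_of_le _ fun y _ => by rw [← norm_mul, mul_sum]; simp_rw [mul_assoc]; rfl
  have sum_sq_le : ∑ y, ‖α y‖ ^ 2 ≤ a * ∑ y, ‖α y‖ := by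
    rw [mul_sum]
    exact sum_le_sum fun y _ => by rw [sq]; gcongr; exact hα y
  calc ‖∑ y, ∑ z, α y * β z * ψ (y ⬝ᵥ B *ᵥ z)‖ ^ 2
    _ ≤ (∑ y, ‖α y‖ * ‖∑ z, β z * ψ (y ⬝ᵥ B *ᵥ z)‖) ^ 2 := by gcongr
    _ ≤ (∑ y, ‖α y‖ ^ 2) * ∑ y, ‖∑ z, β z * ψ (y ⬝ᵥ B *ᵥ z)‖ ^ 2 :=
        sum_mul_sq_le_sq_mul_sq _ _ _
    _ ≤ (a * ∑ y, ‖α y‖) * ((Fintype.card R : ℝ) ^ Fintype.card Y *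
          (Nat.card (LinearMap.ker B.mulVecLin) * b * ∑ z, ‖β z‖)) :=
        mul_le_mul sum_sq_le (sum_norm_sq_sum_addChar_le hψ B hβ) (by positivity)
          (le_trans (by positivity) sum_sq_le)
    _ = _ := by ring

omit [Fintype R] in
lemma sumElim_dotProduct_mulVec_sumElim (G : Matrix (Y ⊕ Z) (Y ⊕ Z) R) (y : Y → R) (z : Z → R) :
    Sum.elim y z ⬝ᵥ G *ᵥ Sum.elim y z =
      y ⬝ᵥ G.toBlocks₁₁ *ᵥ y + z ⬝ᵥ G.toBlocks₂₂ *ᵥ z +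
        y ⬝ᵥ (G.toBlocks₁₂ + G.toBlocks₂₁ᵀ) *ᵥ z := by
  conv_lhs => rw [← fromBlocks_toBlocks G]
  rw [fromBlocks_mulVec, sumElim_dotProduct_sumElim, Sum.elim_comp_inl, Sum.elim_comp_inr,
    add_mulVec, mulVec_transpose, dotProduct_add, dotProduct_add, dotProduct_add,
    dotProduct_mulVec z G.toBlocks₂₁ y, dotProduct_comm y (z ᵥ* G.toBlocks₂₁)]
  ring

lemma sum_norm_prod_mul_addChar [DecidableEq Y] (w : R → ℂ) (h : (Y → R) → R) :
    ∑ y : Y → R, ‖(∏ i, w (y i)) * ψ (h y)‖ = (∑ r, ‖w r‖) ^ Fintype.card Y := by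
  simp_rw [norm_mul, AddChar.norm_apply, mul_one, norm_prod]
  rw [← Fintype.prod_sum fun _ r => ‖w r‖, prod_const, card_univ]

omit [Fintype R] in
lemma norm_prod_mul_addChar_le [Finite R] {w : R → ℂ} {b : ℝ} (hw : ∀ r, ‖w r‖ ≤ b)
    (h : (Y → R) → R) (y : Y → R) : ‖(∏ i, w (y i)) * ψ (h y)‖ ≤ b ^ Fintype.card Y := by
  rw [norm_mul, AddChar.norm_apply, mul_one, norm_prod, ← card_univ, ← prod_const]
  exact prod_le_prod (fun i _ => norm_nonneg (w (y i))) fun i _ => hw (y i)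

/-- The diagonal blocks only twist the weights by functions of modulus one, so the Cauchy–Schwarz
bound for the bilinear part applies. -/
lemma norm_sq_sum_prod_mul_addChar_quadratic_le [DecidableEq Y] [DecidableEq Z]
    (hψ : ψ.IsPrimitive) (G : Matrix (Y ⊕ Z) (Y ⊕ Z) R) {w : R → ℂ} {b : ℝ}
    (hw : ∀ r, ‖w r‖ ≤ b) (hw_sum : ∑ r, ‖w r‖ = 1) :
    ‖∑ x : Y ⊕ Z → R, (∏ i, w (x i)) * ψ (x ⬝ᵥ G *ᵥ x)‖ ^ 2 ≤
      b ^ (Fintype.card Y + Fintype.card Z) * (Fintype.card R ^ Fintype.card Y *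
        Nat.card (LinearMap.ker (G.toBlocks₁₂ + G.toBlocks₂₁ᵀ).mulVecLin)) := by
  set α : (Y → R) → ℂ := fun y => (∏ i, w (y i)) * ψ (y ⬝ᵥ G.toBlocks₁₁ *ᵥ y)
  set β : (Z → R) → ℂ := fun z => (∏ i, w (z i)) * ψ (z ⬝ᵥ G.toBlocks₂₂ *ᵥ z)
  have sum_eq : ∑ x : Y ⊕ Z → R, (∏ i, w (x i)) * ψ (x ⬝ᵥ G *ᵥ x) =
      ∑ y, ∑ z, α y * β z * ψ (y ⬝ᵥ (G.toBlocks₁₂ + G.toBlocks₂₁ᵀ) *ᵥ z) := by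
    rw [← (Equiv.sumArrowEquivProdArrow Y Z R).symm.sum_comp, Fintype.sum_prod_type]
    refine sum_congr rfl fun y _ => sum_congr rfl fun z _ => ?_
    change (∏ i, w (Sum.elim y z i)) * ψ (Sum.elim y z ⬝ᵥ G *ᵥ Sum.elim y z) = _
    rw [sumElim_dotProduct_mulVec_sumElim, AddChar.map_add_eq_mul, AddChar.map_add_eq_mul,
      Fintype.prod_sum_type]
    simp only [Sum.elim_inl, Sum.elim_inr, α, β]
    ring
  rw [sum_eq]
  refine (norm_sq_bilinear_sum_le hψ _ (norm_prod_mul_addChar_le hw _)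
    (norm_prod_mul_addChar_le hw _)).trans_eq ?_
  rw [sum_norm_prod_mul_addChar, sum_norm_prod_mul_addChar, hw_sum, one_pow, one_pow, pow_add]
  ring

end BilinearSums

section KernelBounds

lemma card_eq_card_ker_mul_card_range {R M N : Type*} [Ring R] [AddCommGroup M] [AddCommGroup N]
    [Module R M] [Module R N] (f : M →ₗ[R] N) :
    Nat.card M = Nat.card (LinearMap.ker f) * Nat.card (LinearMap.range f) := by
  rw [(LinearMap.ker f).card_eq_card_quotient_mul_card,
    Nat.card_congr f.quotKerEquivRange.toEquiv]

lemma card_ker_mul_card_le_card_ker_comp_mul_card {R M N P : Type*} [Ring R] [AddCommGroup M]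
    [AddCommGroup N] [AddCommGroup P] [Module R M] [Module R N] [Module R P] [Finite M]
    (f : M →ₗ[R] N) (g : P →ₗ[R] M) :
    Nat.card (LinearMap.ker f) * Nat.card P ≤
      Nat.card (LinearMap.ker (f ∘ₗ g)) * Nat.card M := by
  have card_range_le :
      Nat.card (LinearMap.range (f ∘ₗ g)) ≤ Nat.card (LinearMap.range f) :=
    Nat.card_mono (Set.finite_range f) (LinearMap.range_comp_le_range g f)
  calc Nat.card (LinearMap.ker f) * Nat.card P
    _ = Nat.card (LinearMap.ker f) *
          (Nat.card (LinearMap.ker (f ∘ₗ g)) * Nat.card (LinearMap.range (f ∘ₗ g))) := by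
        rw [← card_eq_card_ker_mul_card_range]
    _ ≤ Nat.card (LinearMap.ker f) *
          (Nat.card (LinearMap.ker (f ∘ₗ g)) * Nat.card (LinearMap.range f)) := by gcongr
    _ = Nat.card (LinearMap.ker (f ∘ₗ g)) * Nat.card M := by
        rw [card_eq_card_ker_mul_card_range f]; ring

lemma card_ker_mulVecLin_mul_le_submatrix {R m n k l : Type*} [CommRing R] [Finite R] [Fintype n]
    [Fintype l] (B : Matrix m n R) (r : k → m) (c : l → n) :
    Nat.card (LinearMap.ker B.mulVecLin) * Nat.card R ^ Fintype.card l ≤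
      Nat.card (LinearMap.ker (B.submatrix r c).mulVecLin) * Nat.card R ^ Fintype.card n := by
  have comp_eq : (B.submatrix id c).mulVecLin =
      B.mulVecLin ∘ₗ ((1 : Matrix n n R).submatrix id c).mulVecLin := by
    rw [← mulVecLin_mul]
    congr
    ext
    simp [mul_apply, one_apply]
  have ker_le : LinearMap.ker (B.submatrix id c).mulVecLin ≤
      LinearMap.ker (B.submatrix r c).mulVecLin := fun x hx =>
    funext fun i => congrFun hx (r i)
  have card_ker_le := Nat.card_mono (Set.toFinite _) ker_le
  have := card_ker_mul_card_le_card_ker_comp_mul_card B.mulVecLin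
    ((1 : Matrix n n R).submatrix id c).mulVecLin
  rw [← comp_eq, Nat.card_fun, Nat.card_fun, Nat.card_eq_fintype_card (α := l),
    Nat.card_eq_fintype_card (α := n)] at this
  exact this.trans (Nat.mul_le_mul_right _ card_ker_le)

lemma card_ker_mulVecLin_le_det {R n : Type*} [CommRing R] [Fintype R] [DecidableEq R] [Fintype n]
    [DecidableEq n] (A : Matrix n n R) :
    Nat.card (LinearMap.ker A.mulVecLin) ≤ #{x | A.det * x = 0} ^ Fintype.card n := by
  have mem_of_mem_ker (v : n → R) (hv : A *ᵥ v = 0) :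
      v ∈ Fintype.piFinset fun _ : n => ({x | A.det * x = 0} : Finset R) := by
    rw [Fintype.mem_piFinset]
    intro i
    have : A.det • v = 0 := by
      rw [← one_mulVec v, ← smul_mulVec, ← adjugate_mul, ← mulVec_mulVec, hv, mulVec_zero]
    simpa using congrFun this i
  rw [← card_univ, ← prod_const, ← Fintype.card_piFinset, Nat.card_eq_fintype_card,
    Fintype.card_subtype]
  refine card_le_card fun v hv => mem_of_mem_ker v ?_
  simpa using hv

lemma card_filter_intCast_mul_eq_zero_le (q : ℕ) [NeZero q] {d : ℤ} (hd : d ≠ 0) :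
    #{x : ZMod q | (d : ZMod q) * x = 0} ≤ d.natAbs := by
  refine le_trans (card_le_card fun x hx => ?_)
    (IsAddCyclic.card_nsmul_eq_zero_le (α := ZMod q) (Int.natAbs_pos.2 hd))
  simp only [mem_filter, mem_univ, true_and] at hx ⊢
  rw [← zsmul_eq_mul] at hx
  rw [← natCast_zsmul, Int.natCast_natAbs]
  rcases abs_choice d with h | h <;> simp [h, hx]

lemma exists_linearIndependent_col_submatrix {K m n : Type*} [Field K] [Fintype n]
    (A : Matrix m n K) {r : ℕ} (hr : A.rank = r) :
    ∃ c : Fin r → n, LinearIndependent K (A.submatrix id c).col := by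
  have := FiniteDimensional.span_of_finite K (Set.finite_range A.col)
  obtain ⟨v, v_mem, -, hv⟩ := Submodule.exists_fun_fin_finrank_span_eq K (Set.range A.col)
  rw [rank_eq_finrank_span_cols] at hr
  subst hr
  choose c hc using v_mem
  have col_eq : (A.submatrix id c).col = v := funext hc
  exact ⟨c, col_eq ▸ hv⟩

lemma exists_det_submatrix_ne_zero {K m n : Type*} [Field K] [Finite m] [Fintype n]
    (A : Matrix m n K) :
    ∃ (ρ : Fin A.rank → m) (c : Fin A.rank → n), (A.submatrix ρ c).det ≠ 0 := by
  have := Fintype.ofFinite m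
  obtain ⟨c, hc⟩ := exists_linearIndependent_col_submatrix A rfl
  have rank_eq : (A.submatrix id c)ᵀ.rank = A.rank := by
    simpa using LinearIndependent.rank_matrix (M := (A.submatrix id c)ᵀ) hc
  obtain ⟨ρ, hρ⟩ := exists_linearIndependent_col_submatrix _ rank_eq
  refine ⟨ρ, c, fun h => ?_⟩
  have : LinearIndependent K (A.submatrix ρ c).row := hρ
  rw [linearIndependent_rows_iff_isUnit, isUnit_iff_isUnit_det] at this
  exact this.ne_zero h

lemma exists_card_ker_mul_pow_rank_le {m n : Type*} [Finite m] [Fintype n] (B : Matrix m n ℤ) :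
    ∃ N : ℕ, ∀ q : ℕ, [NeZero q] →
      Nat.card (LinearMap.ker (B.map (Int.cast : ℤ → ZMod q)).mulVecLin) *
        q ^ (B.map (Int.cast : ℤ → ℚ)).rank ≤ N * q ^ Fintype.card n := by
  obtain ⟨ρ, c, hdet⟩ := exists_det_submatrix_ne_zero (B.map (Int.cast : ℤ → ℚ))
  have det_cast {R : Type} [CommRing R] :
      ((B.map (Int.cast : ℤ → R)).submatrix ρ c).det = ((B.submatrix ρ c).det : R) := by
    rw [submatrix_map, Int.cast_det]
  have det_ne_zero : (B.submatrix ρ c).det ≠ 0 := by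
    rwa [det_cast, Int.cast_ne_zero] at hdet
  refine ⟨(B.submatrix ρ c).det.natAbs ^ (B.map (Int.cast : ℤ → ℚ)).rank, fun q _ => ?_⟩
  have card_ker_submatrix_le :=
    card_ker_mulVecLin_le_det ((B.map (Int.cast : ℤ → ZMod q)).submatrix ρ c)
  have card_ker_le := card_ker_mulVecLin_mul_le_submatrix (B.map (Int.cast : ℤ → ZMod q)) ρ c
  rw [Fintype.card_fin, det_cast] at card_ker_submatrix_le
  rw [Nat.card_zmod, Fintype.card_fin] at card_ker_le
  refine card_ker_le.trans (Nat.mul_le_mul_right _ (card_ker_submatrix_le.trans ?_))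
  exact Nat.pow_le_pow_left (card_filter_intCast_mul_eq_zero_le q det_ne_zero) _

end KernelBounds

section LocalBounds

lemma isPrimitive_mulShift {R : Type*} [CommRing R] {ψ : AddChar R ℂ} (hψ : ψ.IsPrimitive) {a : R}
    (ha : IsUnit a) : (ψ.mulShift a).IsPrimitive := fun b hb => by
  rw [AddChar.mulShift_mulShift]
  exact hψ (by rwa [Ne, ha.mul_right_eq_zero])

lemma evalForm_comp_equiv_symm {R ι κ : Type*} [CommRing R] [Fintype ι] [Fintype κ] (e : κ ≃ ι)
    (F : Matrix ι ι ℤ) (x : κ → R) : evalForm F (x ∘ e.symm) = evalForm (F.submatrix e e) x := by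
  rw [evalForm, evalForm, ← submatrix_map, submatrix_mulVec_equiv, comp_equiv_symm_dotProduct]

lemma norm_sq_sum_prod_mul_addChar_evalForm_le {R Y Z ι : Type*} [CommRing R] [Fintype R]
    [Fintype Y] [Fintype Z] [Fintype ι] [DecidableEq ι]
    {ψ : AddChar R ℂ} (hψ : ψ.IsPrimitive) (e : Y ⊕ Z ≃ ι) (F : Matrix ι ι ℤ) (t : R) {w : R → ℂ}
    {b : ℝ} (hw : ∀ r, ‖w r‖ ≤ b) (hw_sum : ∑ r, ‖w r‖ = 1) :
    ‖∑ x : ι → R, (∏ i, w (x i)) * ψ (evalForm F x - t)‖ ^ 2 ≤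
      b ^ Fintype.card ι * (Fintype.card R ^ Fintype.card Y * Nat.card (LinearMap.ker
        (((F + Fᵀ).submatrix e e).toBlocks₁₂.map (Int.cast : ℤ → R)).mulVecLin)) := by
  set G : Matrix (Y ⊕ Z) (Y ⊕ Z) R := (F.submatrix e e).map (Int.cast : ℤ → R)
  have block_eq : ((F + Fᵀ).submatrix e e).toBlocks₁₂.map (Int.cast : ℤ → R) =
      G.toBlocks₁₂ + G.toBlocks₂₁ᵀ := by
    ext y z
    simp [G, toBlocks₁₂, toBlocks₂₁]
  have norm_eq : ‖∑ x : ι → R, (∏ i, w (x i)) * ψ (evalForm F x - t)‖ =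
      ‖∑ x : Y ⊕ Z → R, (∏ i, w (x i)) * ψ (evalForm (F.submatrix e e) x)‖ := by
    simp_rw [sub_eq_add_neg, AddChar.map_add_eq_mul, ← mul_assoc, ← sum_mul]
    rw [norm_mul, AddChar.norm_apply, mul_one, ← (e.arrowCongr (Equiv.refl R)).sum_comp]
    congr 1
    refine sum_congr rfl fun x _ => ?_
    have arrow_eq : e.arrowCongr (Equiv.refl R) x = x ∘ e.symm := rfl
    rw [arrow_eq, evalForm_comp_equiv_symm, ← e.prod_comp]
    simp only [Function.comp_apply, Equiv.symm_apply_apply]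
  rw [norm_eq, block_eq, ← Fintype.card_congr e, Fintype.card_sum]
  exact norm_sq_sum_prod_mul_addChar_quadratic_le hψ G hw hw_sum

/-- The splitting of the variables into the first `⌊s/2⌋` and the remaining ones that underlies
`F2block`. -/
def halfSplit (s : ℕ) : Fin (s / 2) ⊕ Fin (s - s / 2) ≃ Fin s :=
  finSumFinEquiv.trans (finCongr (Nat.add_sub_of_le (Nat.div_le_self s 2)))

/-- The block `F₂` with integer entries, so that it can be reduced modulo `q`. -/
def offDiagBlock {s : ℕ} (F : Matrix (Fin s) (Fin s) ℤ) :
    Matrix (Fin (s / 2)) (Fin (s - s / 2)) ℤ :=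
  (F.submatrix (halfSplit s) (halfSplit s)).toBlocks₁₂

lemma F2block_eq_map_offDiagBlock {s : ℕ} (F : Matrix (Fin s) (Fin s) ℤ) :
    F2block F = (offDiagBlock F).map (Int.cast : ℤ → ℚ) := rfl

variable {s : ℕ} (F : Matrix (Fin s) (Fin s) ℤ) (σ : Equiv.Perm (Fin s)) {κ : ℕ → ℕ → ℝ}

lemma norm_sq_Sta_le_card_ker (t : ℤ) (q : ℕ) [NeZero q] {a : ℤ} {b : ℝ} (ha : IsCoprime a q)
    (hκ0 : ∀ h, 0 ≤ κ q h) (hκsum : ∑ h ∈ range q, κ q h = 1) (hκ : ∀ h, κ q h ≤ b) :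
    ‖Sta F t κ q a‖ ^ 2 ≤ b ^ s * (q ^ (s / 2) * Nat.card (LinearMap.ker
      ((offDiagBlock ((F + Fᵀ).submatrix σ σ)).map (Int.cast : ℤ → ZMod q)).mulVecLin)) := by
  have isUnit_a : IsUnit (a : ZMod q) := (ZMod.coe_int_isUnit_iff_isCoprime a q).2 ha.symm
  have hw (x : ZMod q) : ‖(κ q x.val : ℂ)‖ ≤ b := by
    rw [Complex.norm_of_nonneg (hκ0 _)]
    exact hκ _
  have hw_sum : ∑ x : ZMod q, ‖(κ q x.val : ℂ)‖ = 1 := by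
    simp_rw [Complex.norm_of_nonneg (hκ0 _)]
    rw [← sum_range_eq_sum_zmod q (κ q), hκsum]
  have key := norm_sq_sum_prod_mul_addChar_evalForm_le
    (isPrimitive_mulShift (ZMod.isPrimitive_stdAddChar q) isUnit_a) ((halfSplit s).trans σ) F
    (t : ZMod q) hw hw_sum
  simp only [AddChar.mulShift_apply, ← Sta_eq_sum_zmod, ZMod.card, Fintype.card_fin] at key
  exact key

lemma exists_norm_sq_Sta_le : ∃ N : ℕ, ∀ (t : ℤ) (κ : ℕ → ℕ → ℝ) (q : ℕ) (a : ℤ) (K : ℝ), 0 < q →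
    IsCoprime a q → (∀ h, 0 ≤ κ q h) → ∑ h ∈ range q, κ q h = 1 → (∀ h, κ q h ≤ K / q) →
      ‖Sta F t κ q a‖ ^ 2 ≤ N * K ^ s / q ^ rankF2 ((F + Fᵀ).submatrix σ σ) := by
  set G := (F + Fᵀ).submatrix σ σ
  obtain ⟨N, hN⟩ := exists_card_ker_mul_pow_rank_le (offDiagBlock G)
  rw [← F2block_eq_map_offDiagBlock, ← rankF2, Fintype.card_fin] at hN
  refine ⟨N, fun t κ q a K hq ha hκ0 hκsum hκ => ?_⟩
  have : NeZero q := ⟨hq.ne'⟩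
  set k := Nat.card (LinearMap.ker ((offDiagBlock G).map (Int.cast : ℤ → ZMod q)).mulVecLin)
  have ker_le : (k * q ^ rankF2 G : ℝ) ≤ N * q ^ (s - s / 2) := by exact_mod_cast hN q
  have weight_bound_nonneg : 0 ≤ K / q := (hκ0 0).trans (hκ 0)
  rw [le_div_iff₀ (by positivity)]
  calc ‖Sta F t κ q a‖ ^ 2 * q ^ rankF2 G
    _ ≤ (K / q) ^ s * (q ^ (s / 2) * k) * q ^ rankF2 G := by
        gcongr
        exact norm_sq_Sta_le_card_ker F σ t q ha hκ0 hκsum hκ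
    _ = (K / q) ^ s * (q ^ (s / 2) * (k * q ^ rankF2 G)) := by ring
    _ ≤ (K / q) ^ s * (q ^ (s / 2) * (N * q ^ (s - s / 2))) := by gcongr
    _ = (K / q) ^ s * (N * q ^ s) := by
        rw [mul_left_comm _ (N : ℝ), ← pow_add, Nat.add_sub_of_le (Nat.div_le_self s 2)]
    _ = N * K ^ s := by
        rw [div_pow]
        field_simp

end LocalBounds

lemma CondK.exists_le_rpow {κ : ℕ → ℕ → ℝ} (hK : CondK κ) {ε : ℝ} (hε : 0 < ε) :
    ∃ C : ℝ, 0 < C ∧ ∀ q : ℕ, 2 ≤ q → ∀ h, κ q h ≤ C * (q : ℝ) ^ ε / q := by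
  obtain ⟨c, hc, C, hC, hκ⟩ := hK
  set δ := ε / (c + 1)
  have hδ : 0 < δ := by positivity
  refine ⟨C / δ ^ c, by positivity, fun q hq h => (hκ q hq h).trans ?_⟩
  have one_le_q : (1 : ℝ) ≤ q := by exact_mod_cast one_le_two.trans hq
  have log_rpow_le : Real.log q ^ c ≤ (q : ℝ) ^ ε / δ ^ c := calc
    Real.log q ^ c ≤ ((q : ℝ) ^ δ / δ) ^ c := by
        have := Real.log_nonneg one_le_q
        gcongr
        exact Real.log_le_rpow_div (by positivity) hδ
    _ = (q : ℝ) ^ (δ * c) / δ ^ c := by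
        rw [Real.div_rpow (by positivity) hδ.le, ← Real.rpow_mul (by positivity)]
    _ ≤ (q : ℝ) ^ ε / δ ^ c := by
        gcongr ?_ / _
        refine Real.rpow_le_rpow_of_exponent_le one_le_q ?_
        rw [div_mul_eq_mul_div, div_le_iff₀ (by positivity)]
        nlinarith
  calc C * Real.log q ^ c / q ≤ C * ((q : ℝ) ^ ε / δ ^ c) / q := by gcongr
    _ = C / δ ^ c * (q : ℝ) ^ ε / q := by ring

section SingularSeries

variable {s : ℕ} (F : Matrix (Fin s) (Fin s) ℤ) (t : ℤ) {κ : ℕ → ℕ → ℝ}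
  (hκ0 : ∀ q h, 0 ≤ κ q h) (hκsum : ∀ q : ℕ, 0 < q → ∑ h ∈ range q, κ q h = 1) (hK : CondK κ)
  (σ : Equiv.Perm (Fin s))
include hκ0 hκsum hK

lemma exists_norm_Sta_le {ε : ℝ} (hε : 0 < ε) : ∃ D : ℝ, ∀ (q : ℕ) (a : ℤ), 2 ≤ q →
    IsCoprime a q →
      ‖Sta F t κ q a‖ ≤ D * (q : ℝ) ^ (ε - rankF2 ((F + Fᵀ).submatrix σ σ) / 2) := by
  obtain ⟨N, hN⟩ := exists_norm_sq_Sta_le F σ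
  obtain ⟨C, hC, hκ⟩ := hK.exists_le_rpow (ε := 2 * ε / (s + 1)) (by positivity)
  refine ⟨√(N * C ^ s), fun q a hq ha => ?_⟩
  have one_le_q : (1 : ℝ) ≤ q := by exact_mod_cast one_le_two.trans hq
  have rpow_le : ((q : ℝ) ^ (2 * ε / (s + 1))) ^ s ≤ (q : ℝ) ^ (2 * ε) := by
    rw [← Real.rpow_mul_natCast (by positivity)]
    refine Real.rpow_le_rpow_of_exponent_le one_le_q ?_
    rw [div_mul_eq_mul_div, div_le_iff₀ (by positivity)]
    nlinarith
  refine (pow_le_pow_iff_left₀ (norm_nonneg _) (by positivity) two_ne_zero).1 ?_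
  set r := rankF2 ((F + Fᵀ).submatrix σ σ)
  calc ‖Sta F t κ q a‖ ^ 2 ≤ N * (C * (q : ℝ) ^ (2 * ε / (s + 1))) ^ s / (q : ℝ) ^ r :=
        hN t κ q a _ (by omega) ha (hκ0 q) (hκsum q (by omega)) (hκ q hq)
    _ ≤ N * C ^ s * ((q : ℝ) ^ (2 * ε) / (q : ℝ) ^ r) := by
        rw [mul_pow, ← mul_assoc, mul_div_assoc]
        gcongr
    _ = (√(N * C ^ s) * (q : ℝ) ^ (ε - r / 2)) ^ 2 := by
        rw [mul_pow, Real.sq_sqrt (by positivity), ← Real.rpow_mul_natCast (by positivity),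
          ← Real.rpow_natCast (q : ℝ) r, ← Real.rpow_sub (by positivity)]
        congr 2
        push_cast
        ring

lemma exists_norm_BqT_le {ε : ℝ} (hε : 0 < ε) : ∃ D : ℝ, ∀ q : ℕ, 2 ≤ q →
    ‖BqT F t κ q‖ ≤ D * (q : ℝ) ^ (1 + ε - rankF2 ((F + Fᵀ).submatrix σ σ) / 2 : ℝ) := by
  obtain ⟨D, hD⟩ := exists_norm_Sta_le F t hκ0 hκsum hK σ hε
  refine ⟨D, fun q hq => ?_⟩
  set r := rankF2 ((F + Fᵀ).submatrix σ σ)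
  have q_pos : (0 : ℝ) < q := by exact_mod_cast two_pos.trans_le hq
  have bound_nonneg : 0 ≤ D * (q : ℝ) ^ (ε - r / 2 : ℝ) :=
    (norm_nonneg _).trans (hD q 1 hq isCoprime_one_left)
  have card_le : #{a ∈ Icc 1 q | a.Coprime q} ≤ q := by
    simpa using card_filter_le (Icc 1 q) fun a => a.Coprime q
  calc ‖BqT F t κ q‖ ≤ ∑ a ∈ Icc 1 q with a.Coprime q, D * (q : ℝ) ^ (ε - r / 2 : ℝ) :=
        norm_sum_le_of_le _ fun a ha =>
          hD q a hq (Nat.isCoprime_iff_coprime.2 (mem_filter.1 ha).2)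
    _ ≤ q * (D * (q : ℝ) ^ (ε - r / 2 : ℝ)) := by
        rw [sum_const, nsmul_eq_mul]
        gcongr
    _ = D * (q : ℝ) ^ (1 + ε - r / 2 : ℝ) := by
        rw [add_sub_assoc, Real.rpow_add q_pos, Real.rpow_one]
        ring

lemma summable_BqT_prime_pow (hrank : 3 ≤ rankF2 ((F + Fᵀ).submatrix σ σ)) {p : ℕ}
    (hp : p.Prime) : Summable fun k => BqT F t κ (p ^ k) := by
  obtain ⟨D, hD⟩ := exists_norm_BqT_le F t hκ0 hκsum hK σ (ε := 1 / 4) (by norm_num)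
  have hrank' : (3 : ℝ) ≤ rankF2 ((F + Fᵀ).submatrix σ σ) := by exact_mod_cast hrank
  set θ : ℝ := 1 + 1 / 4 - rankF2 ((F + Fᵀ).submatrix σ σ) / 2
  have p_pow_lt_one : (p : ℝ) ^ θ < 1 :=
    Real.rpow_lt_one_of_one_lt_of_neg (by exact_mod_cast hp.one_lt) (by simp only [θ]; linarith)
  refine (summable_nat_add_iff 1).1 (Summable.of_norm_bounded
    (((summable_nat_add_iff 1).2
      (summable_geometric_of_lt_one (by positivity) p_pow_lt_one)).mul_left D) fun k => ?_)
  have two_le : 2 ≤ p ^ (k + 1) := hp.two_le.trans (Nat.le_self_pow k.succ_ne_zero p)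
  refine (hD _ two_le).trans_eq ?_
  rw [Nat.cast_pow, ← Real.rpow_natCast_mul (by positivity), mul_comm (_ : ℝ) θ,
    Real.rpow_mul_natCast (by positivity)]

end SingularSeries

theorem statement11_general {s : ℕ} (F : Matrix (Fin s) (Fin s) ℤ) (t : ℤ) (κ : ℕ → ℕ → ℝ)
    (hκ0 : ∀ q h, 0 ≤ κ q h)
    (hκsum : ∀ q : ℕ, 0 < q → ∑ h ∈ range q, κ q h = 1)
    (hκcompat : ∀ q q' : ℕ, 0 < q → 0 < q' → ∀ h : ℕ,
      κ q h = ∑ b ∈ range (q * q'), if b % q = h % q then κ (q * q') b else 0)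
    (σ : Equiv.Perm (Fin s)) (hrank : 3 ≤ rankF2 ((F + Fᵀ).submatrix σ σ)) (hK : CondK κ)
    {p : ℕ} (hp : p.Prime) :
    ∃ χ : ℂ, HasSum (fun k : ℕ => BqT F t κ (p ^ k)) χ ∧
      Tendsto (fun m : ℕ => (((p : ℝ) ^ m * Mcount F t κ (p ^ m) : ℝ) : ℂ)) atTop (nhds χ) := by
  obtain ⟨χ, hχ⟩ := summable_BqT_prime_pow F t hκ0 hκsum hK σ hrank hp
  refine ⟨χ, hχ, ?_⟩
  have compat_prime_pow (k : ℕ) := hκcompat (p ^ k) p (pow_pos hp.pos k) hp.pos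
  simp_rw [prime_pow_mul_Mcount_eq_sum_BqT F t κ hp compat_prime_pow]
  exact hχ.tendsto_sum_nat.comp (tendsto_add_atTop_nat 1)

lemma rankF2_add_transpose_submatrix {s : ℕ} {F : Matrix (Fin s) (Fin s) ℤ} (hF : F.IsSymm)
    (σ : Equiv.Perm (Fin s)) :
    rankF2 ((F + Fᵀ).submatrix σ σ) = rankF2 (F.submatrix σ σ) := by
  have block_eq : F2block ((F + Fᵀ).submatrix σ σ) = (2 : ℚ) • F2block (F.submatrix σ σ) := by
    ext i j
    simp [F2block, hF.eq, two_mul]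
  rw [rankF2, block_eq, rank_smul_of_mem_nonZeroDivisors _ (by simp), rankF2]

/-- Lemma 5.7: the weighted `p`-adic density equals `χ̃_p(𝒜)`,
i.e. `χ̃_p(𝒜) = lim_{m→∞} p^m M(p^m)`. -/
theorem statement11 {s : ℕ} (F : Matrix (Fin s) (Fin s) ℤ) (hFsymm : F.IsSymm) (t : ℤ)
    (a : ℕ → ℝ) (ha : ∀ x, 0 ≤ a x) (QD : ℝ → ℝ) (κ : ℕ → ℕ → ℝ)
    (hκ0 : ∀ q h, 0 ≤ κ q h)
    (hκsum : ∀ q : ℕ, 0 < q → ∑ h ∈ Finset.range q, κ q h = 1)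
    (hκcompat : ∀ q q' : ℕ, 0 < q → 0 < q' → ∀ h : ℕ,
      κ q h = ∑ b ∈ Finset.range (q * q'), if b % q = h % q then κ (q * q') b else 0)
    (hL1 : CondL1 F) (hC : CondC QD κ) (hD : CondD a QD κ) (hK : CondK κ) :
    ∀ p : ℕ, p.Prime → ∃ χ : ℂ,
      HasSum (fun k : ℕ => BqT F t κ (p ^ k)) χ ∧
      Filter.Tendsto (fun m : ℕ => (((p : ℝ) ^ m * Mcount F t κ (p ^ m) : ℝ) : ℂ))
        Filter.atTop (nhds χ) := by
  obtain ⟨σ, hσ⟩ := hL1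
  rw [← rankF2_add_transpose_submatrix hFsymm] at hσ
  exact fun p => statement11_general F t κ hκ0 hκsum hκcompat σ (by omega) hK

end
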